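/- Let M be a II₁ factor with trace τ. For self-adjoint a, b ∈ M, ‖λ_a − λ_b‖_{L¹[0,1]} ≤ ‖a − b‖₁, where ‖x‖₁ = τ(|x|). -/

import Mathlib

open scoped ComplexOrder

/- We model a II₁ factor abstractly: a unital C*-algebra `A` (with its canonical order)
together with a normalized faithful tracial state `τ` which has trivial center and
projections of every trace in `[0,1]`.  (Normality of `τ` and of the subalgebras is
implicit in the properties we record, e.g. right-continuity of spectral distributions.)
On bounded sets the σ-strong operator topology of a II₁ factor coincides with the
topology of the trace norm `‖x‖₁ = τ(|x|)`; accordingly σ-strong closures of bounded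
sets are formalized as `‖·‖₁`-closures. -/

variable {A : Type*} [CStarAlgebra A] [PartialOrder A] [StarOrderedRing A]

/-- A normalized faithful tracial state on a finite von Neumann algebra. -/
structure IsFiniteTrace (τ : A →ₗ[ℂ] ℂ) : Prop where
  tracial : ∀ x y : A, τ (x * y) = τ (y * x)
  pos : ∀ x : A, 0 ≤ x → 0 ≤ τ x
  faithful : ∀ x : A, 0 ≤ x → τ x = 0 → x = 0
  normalized : τ 1 = 1

/-- The trace of a II₁ factor: a normalized faithful tracial state on an algebra with
trivial center and with projections of every trace `t ∈ [0,1]`. -/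
structure IsII1Trace (τ : A →ₗ[ℂ] ℂ) extends IsFiniteTrace τ : Prop where
  factor : ∀ z : A, (∀ x : A, z * x = x * z) → ∃ c : ℂ, z = c • (1 : A)
  proj : ∀ t ∈ Set.Icc (0:ℝ) 1, ∃ p : A, IsSelfAdjoint p ∧ p * p = p ∧ τ p = (t : ℂ)

/-- `e s` is the spectral projection `p^a(-∞, s]` of the selfadjoint element `a`:
an increasing right-continuous (in trace) family of projections commuting with `a`,
below which `a ≤ s` and above which `a ≥ s`. -/
structure IsSpectralResolution (τ : A →ₗ[ℂ] ℂ) (a : A) (e : ℝ → A) : Prop where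
  selfAdjoint : ∀ s, IsSelfAdjoint (e s)
  idem : ∀ s, e s * e s = e s
  mono : Monotone e
  comm : ∀ s, a * e s = e s * a
  below : ∀ s : ℝ, a * e s ≤ (s : ℂ) • e s
  above : ∀ s : ℝ, (s : ℂ) • ((1 : A) - e s) ≤ a * ((1 : A) - e s)
  bot : ∀ s, s < -‖a‖ → e s = 0
  top : ∀ s, ‖a‖ ≤ s → e s = 1
  rightCont : ∀ s, ContinuousWithinAt (fun u => (τ (e u)).re) (Set.Ici s) s

/-- The spectral scale `λ_a(t) = min {s ∈ ℝ : τ(p^a(s,∞)) ≤ t}`, expressed through the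
resolution `e s = p^a(-∞,s]`, so that `τ(p^a(s,∞)) = 1 - τ(e s)`. -/
noncomputable def spectralScale (τ : A →ₗ[ℂ] ℂ) (e : ℝ → A) : ℝ → ℝ :=
  fun t => sInf {s : ℝ | 1 - (τ (e s)).re ≤ t}

/-- Spectral majorization `a ≺ b`: `τ(a) = τ(b)` and `∫₀ˢ λ_a ≤ ∫₀ˢ λ_b` for `s ∈ [0,1)`. -/
def IsSpecMajorizedBy (τ : A →ₗ[ℂ] ℂ) (a b : A) : Prop :=
  τ a = τ b ∧
    ∃ ea eb : ℝ → A, IsSpectralResolution τ a ea ∧ IsSpectralResolution τ b eb ∧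
      ∀ s ∈ Set.Ico (0:ℝ) 1,
        ∫ t in (0:ℝ)..s, spectralScale τ ea t ≤ ∫ t in (0:ℝ)..s, spectralScale τ eb t

/-- The trace norm `‖x‖₁ = τ(|x|)` (defined via continuous functional calculus). -/
noncomputable def traceNorm (τ : A →ₗ[ℂ] ℂ) (x : A) : ℝ :=
  (τ (cfc (fun r : ℝ => |r|) x)).re

/-- The trace-preserving conditional expectation onto a subalgebra `N`. -/
structure IsCondExp (τ : A →ₗ[ℂ] ℂ) (N : StarSubalgebra ℂ A) (E : A →ₗ[ℂ] A) : Prop where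
  mem : ∀ x : A, E x ∈ N
  fix : ∀ x ∈ N, E x = x
  pos : ∀ x : A, 0 ≤ x → 0 ≤ E x
  star_map : ∀ x : A, E (star x) = star (E x)
  trace : ∀ x : A, τ (E x) = τ x
  bimod : ∀ n ∈ N, ∀ x : A, E (n * x) = n * E x ∧ E (x * n) = E x * n

/-- The unitary orbit `U_M(b) = {u b u* : u unitary}`. -/
def unitaryOrbit (b : A) : Set A := {x | ∃ u ∈ unitary A, x = u * b * star u}

/-- `Ω_N(b)`: the selfadjoint elements of `N` spectrally majorized by `b`. -/
def Omega (τ : A →ₗ[ℂ] ℂ) (N : StarSubalgebra ℂ A) (b : A) : Set A :=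
  {a | a ∈ N ∧ IsSelfAdjoint a ∧ IsSpecMajorizedBy τ a b}

/-- The closure of a set in the trace-norm (`‖·‖₁`) topology; for bounded sets this is
the σ-strong closure. -/
def l1Closure (τ : A →ₗ[ℂ] ℂ) (S : Set A) : Set A :=
  {x | ∀ ε > (0:ℝ), ∃ y ∈ S, traceNorm τ (x - y) < ε}

/-- A diffuse von Neumann subalgebra: one with no minimal projections, i.e. every
nonzero projection strictly dominates a nonzero projection. -/
def IsDiffuse (N : StarSubalgebra ℂ A) : Prop :=
  ∀ p ∈ N, IsSelfAdjoint p → p * p = p → p ≠ 0 →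
    ∃ q ∈ N, IsSelfAdjoint q ∧ q * q = q ∧ q * p = q ∧ q ≠ 0 ∧ q ≠ p

/-- An abelian subalgebra. -/
def IsAbelian (N : StarSubalgebra ℂ A) : Prop := ∀ x ∈ N, ∀ y ∈ N, x * y = y * x

/-! The spectral scale is the generalized inverse of the distribution function `s ↦ 1 - τ(e s)`, so
by Tonelli `∫₀¹ |λ_a - λ_b|` is at most the area `∫ |τ(e_a s) - τ(e_b s)| ds` between the
distribution functions. Tested against the derivative `G'` of a polynomial, the difference
`τ(e_a s) - τ(e_b s)` integrates by parts to `τ(G(b)) - τ(G(a))`. Cyclicity of the trace gives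
`d/dt τ(G(b + td)) = τ(d G'(b + td))` even though `b` and `d` do not commute, whence
`|τ(G(a)) - τ(G(b))| ≤ sup |G'| · ‖a - b‖₁`. Approximating the sign of the difference by polynomials
recovers its `L¹` norm. -/

open MeasureTheory Set Filter Topology Polynomial
open scoped symmDiff

lemma hasDerivAt_aeval_add_smul_of_map_mul_comm {B E : Type*} [NormedRing B] [NormedAlgebra ℝ B]
    [NormedAddCommGroup E] [NormedSpace ℝ E] {φ : B →L[ℝ] E}
    (hφ : ∀ x y, φ (x * y) = φ (y * x)) (b d : B) (G : ℝ[X]) (t : ℝ) :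
    HasDerivAt (fun t : ℝ ↦ φ (aeval (b + t • d) G))
      (φ (d * aeval (b + t • d) (derivative G))) t := by
  induction G using Polynomial.induction_on' with
  | add p q hp hq => simpa [mul_add] using hp.fun_add hq
  | monomial n c =>
    have hline : HasDerivAt (fun t : ℝ ↦ b + t • d) d t := by
      simpa using ((hasDerivAt_id t).smul_const d).const_add b
    have hpow := (φ.hasFDerivAt.comp_hasDerivAt t (hline.fun_pow' n)).const_smul c
    have hcycle : ∀ i ∈ Finset.range n,
        φ ((b + t • d) ^ (n.pred - i) * d * (b + t • d) ^ i) =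
          φ (d * (b + t • d) ^ (n - 1)) := fun i hi ↦ by
      have hi' : i + (n.pred - i) = n - 1 := by
        have := Finset.mem_range.1 hi
        simp only [Nat.pred_eq_sub_one]
        lia
      rw [mul_assoc, hφ, mul_assoc, ← pow_add, hi']
    rw [map_sum, Finset.sum_congr rfl hcycle] at hpow
    convert hpow using 1
    · ext s
      simp [aeval_monomial, ← Algebra.smul_def]
    · simp [derivative_monomial, aeval_monomial, ← Algebra.smul_def, ← nsmul_eq_mul]

lemma norm_aeval_le_of_forall_abs_eval_le {B : Type*} [CStarAlgebra B] {x : B}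
    (hx : IsSelfAdjoint x) {R M : ℝ} (hxR : ‖x‖ ≤ R) {g : ℝ[X]}
    (hg : ∀ s ∈ Icc (-R) R, |g.eval s| ≤ M) : ‖aeval x g‖ ≤ M := by
  have hR : 0 ≤ R := (norm_nonneg x).trans hxR
  have hM : 0 ≤ M := (abs_nonneg _).trans (hg 0 ⟨neg_nonpos.2 hR, hR⟩)
  rcases subsingleton_or_nontrivial B with _ | _
  · rwa [Subsingleton.elim (aeval x g) 0, norm_zero]
  · rw [← cfc_polynomial g x hx]
    exact norm_cfc_le hM fun s hs ↦
      hg s (abs_le.1 ((spectrum.norm_le_norm_of_mem hs).trans hxR))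

lemma isSelfAdjoint_aeval {B : Type*} [CStarAlgebra B] {x : B} (hx : IsSelfAdjoint x) (p : ℝ[X]) :
    IsSelfAdjoint (aeval x p) := by
  rw [← cfc_polynomial p x hx]
  exact cfc_predicate _ _

/-- A bounded positive trace, as a real-valued functional: only the real part of a complex trace
enters the estimates. -/
structure IsPositiveTrace (φ : A →L[ℝ] ℝ) : Prop where
  map_mul_comm : ∀ x y, φ (x * y) = φ (y * x)
  map_nonneg : ∀ x, 0 ≤ x → 0 ≤ φ x

namespace IsPositiveTrace

variable {φ : A →L[ℝ] ℝ}

lemma monotone (hφ : IsPositiveTrace φ) : Monotone φ := fun x y hxy ↦ by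
  simpa using hφ.map_nonneg _ (sub_nonneg.2 hxy)

lemma map_mul_nonneg (hφ : IsPositiveTrace φ) {x y : A} (hx : 0 ≤ x) (hy : 0 ≤ y) :
    0 ≤ φ (x * y) := by
  rw [← CFC.sqrt_mul_sqrt_self x hx, mul_assoc, hφ.map_mul_comm]
  exact hφ.map_nonneg _ ((CFC.sqrt_nonneg x).isSelfAdjoint.conjugate_nonneg hy)

lemma abs_map_mul_le_of_nonneg (hφ : IsPositiveTrace φ) {x y : A} (hx : IsSelfAdjoint x)
    (hy : 0 ≤ y) : |φ (x * y)| ≤ ‖x‖ * φ y := by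
  have hle : 0 ≤ φ ((‖x‖ • 1 - x) * y) :=
    hφ.map_mul_nonneg (sub_nonneg.2 (Algebra.algebraMap_eq_smul_one (A := A) ‖x‖ ▸
      hx.le_algebraMap_norm_self)) hy
  have hge : 0 ≤ φ ((x + ‖x‖ • 1) * y) :=
    hφ.map_mul_nonneg (neg_le_iff_add_nonneg.1 (Algebra.algebraMap_eq_smul_one (A := A) ‖x‖ ▸
      hx.neg_algebraMap_norm_le_self)) hy
  simp only [sub_mul, add_mul, smul_mul_assoc, one_mul, map_sub, map_add, map_smul,
    smul_eq_mul] at hle hge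
  exact abs_le.2 ⟨by linarith, by linarith⟩

lemma abs_map_mul_le_norm_mul_map_abs (hφ : IsPositiveTrace φ) {x y : A} (hx : IsSelfAdjoint x)
    (hy : IsSelfAdjoint y) : |φ (x * y)| ≤ ‖x‖ * φ (CFC.abs y) := by
  calc |φ (x * y)| = |φ (x * y⁺) - φ (x * y⁻)| := by
        rw [← map_sub, ← mul_sub, CFC.posPart_sub_negPart y hy]
    _ ≤ |φ (x * y⁺)| + |φ (x * y⁻)| := abs_sub _ _
    _ ≤ ‖x‖ * φ y⁺ + ‖x‖ * φ y⁻ :=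
        add_le_add (hφ.abs_map_mul_le_of_nonneg hx (CFC.posPart_nonneg y))
          (hφ.abs_map_mul_le_of_nonneg hx (CFC.negPart_nonneg y))
    _ = ‖x‖ * φ (CFC.abs y) := by
        rw [← mul_add, ← map_add, CFC.posPart_add_negPart y hy]

lemma abs_map_aeval_sub_le (hφ : IsPositiveTrace φ) {a b : A} (ha : IsSelfAdjoint a)
    (hb : IsSelfAdjoint b) {R M : ℝ} (haR : ‖a‖ ≤ R) (hbR : ‖b‖ ≤ R) {G : ℝ[X]}
    (hG : ∀ s ∈ Icc (-R) R, |(derivative G).eval s| ≤ M) :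
    |φ (aeval a G) - φ (aeval b G)| ≤ M * φ (CFC.abs (a - b)) := by
  have hderiv := hasDerivAt_aeval_add_smul_of_map_mul_comm hφ.map_mul_comm b (a - b) G
  have hbound : ∀ t ∈ Ico (0 : ℝ) 1, ‖φ ((a - b) * aeval (b + t • (a - b)) (derivative G))‖ ≤
      M * φ (CFC.abs (a - b)) := fun t ht ↦ by
    have hx : IsSelfAdjoint (b + t • (a - b)) := hb.add (.smul (.all t) (ha.sub hb))
    have hxR : ‖b + t • (a - b)‖ ≤ R := by
      simpa using (convex_closedBall (0 : A) R).add_smul_sub_mem (by simpa using hbR)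
        (by simpa using haR) (Ico_subset_Icc_self ht)
    rw [hφ.map_mul_comm, Real.norm_eq_abs]
    exact (hφ.abs_map_mul_le_norm_mul_map_abs (isSelfAdjoint_aeval hx _) (ha.sub hb)).trans
      (mul_le_mul_of_nonneg_right (norm_aeval_le_of_forall_abs_eval_le hx hxR hG)
        (hφ.map_nonneg _ (CFC.abs_nonneg _)))
  simpa using norm_image_sub_le_of_norm_deriv_le_segment_01'
    (fun t _ ↦ (hderiv t).hasDerivWithinAt) hbound

end IsPositiveTrace

lemma volume_Ici_symmDiff_Ici (a b : ℝ) : volume (Ici a ∆ Ici b) = ‖a - b‖ₑ := by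
  have h : Ici a ∆ Ici b = Ico (min a b) (max a b) := by
    ext x
    simp only [mem_symmDiff, mem_Ici, mem_Ico, min_le_iff, lt_max_iff, not_le]
    grind
  rw [h, Real.volume_Ico, max_sub_min_eq_abs', Real.enorm_eq_ofReal_abs]

lemma lintegral_enorm_sub_le_of_le_iff_le {f g p q : ℝ → ℝ} {T : Set ℝ} (hT : MeasurableSet T)
    (hp : Measurable p) (hq : Measurable q) (hf : ∀ t ∈ T, ∀ s, f t ≤ s ↔ p s ≤ t)
    (hg : ∀ t ∈ T, ∀ s, g t ≤ s ↔ q s ≤ t) :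
    ∫⁻ t in T, ‖f t - g t‖ₑ ≤ ∫⁻ s, ‖p s - q s‖ₑ := by
  let S : Set (ℝ × ℝ) := {z | p z.2 ≤ z.1} ∆ {z | q z.2 ≤ z.1}
  have hS : MeasurableSet S :=
    (measurableSet_le (hp.comp measurable_snd) measurable_fst).symmDiff
      (measurableSet_le (hq.comp measurable_snd) measurable_fst)
  calc ∫⁻ t in T, ‖f t - g t‖ₑ
      = ∫⁻ t in T, volume (Prod.mk t ⁻¹' S) := by
        refine setLIntegral_congr_fun hT fun t ht ↦ ?_
        have h : Prod.mk t ⁻¹' S = Ici (f t) ∆ Ici (g t) := by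
          ext s
          simp [S, mem_symmDiff, hf t ht, hg t ht]
        simp only [h, volume_Ici_symmDiff_Ici]
    _ = ∫⁻ s, volume.restrict T ((fun t ↦ (t, s)) ⁻¹' S) := by
        rw [← Measure.prod_apply hS, Measure.prod_apply_symm hS]
    _ ≤ ∫⁻ s, volume (Ici (p s) ∆ Ici (q s)) :=
        lintegral_mono fun s ↦ Measure.restrict_apply_le _ _
    _ = ∫⁻ s, ‖p s - q s‖ₑ := by simp only [volume_Ici_symmDiff_Ici]

lemma isBoundedUnder_norm_nhds_of_monotone {X : Type*} [LinearOrder X] [TopologicalSpace X]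
    [OrderTopology X] [NoMinOrder X] [NoMaxOrder X] {F : X → ℝ} (hF : Monotone F) (s : X) :
    IsBoundedUnder (· ≤ ·) (𝓝 s) (norm ∘ F) := by
  obtain ⟨x, hx⟩ := exists_lt s
  obtain ⟨y, hy⟩ := exists_gt s
  refine isBoundedUnder_of_eventually_le (a := max |F x| |F y|) ?_
  filter_upwards [Icc_mem_nhds hx hy] with u hu
  exact abs_le_max_abs_abs (hF hu.1) (hF hu.2)

section StieltjesByParts

variable {g F K : ℝ → ℝ} {s C : ℝ}

lemma continuousAt_of_abs_sub_sub_mul_le (hF : Monotone F) (hg : ContinuousAt g s)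
    (hK : ∀ u, |K u - K s - (g u - g s) * F u| ≤ C * ((u - s) * (F u - F s))) :
    ContinuousAt K s := by
  have hmain : Tendsto (fun u ↦ (g u - g s) * F u) (𝓝 s) (𝓝 0) :=
    (tendsto_sub_nhds_zero_iff.2 hg).zero_mul_isBoundedUnder_le
      (isBoundedUnder_norm_nhds_of_monotone hF s)
  have herr : Tendsto (fun u ↦ C * ((u - s) * (F u - F s))) (𝓝 s) (𝓝 (C * 0)) :=
    ((tendsto_sub_nhds_zero_iff.2 tendsto_id).zero_mul_isBoundedUnder_le
      (isBoundedUnder_norm_nhds_of_monotone (hF.add_const (-F s)) s)).const_mul C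
  rw [mul_zero] at herr
  simpa [ContinuousAt, tendsto_sub_nhds_zero_iff] using (squeeze_zero_norm hK herr).add hmain

lemma hasDerivWithinAt_Ioi_of_abs_sub_sub_mul_le {g' : ℝ} (hg : HasDerivAt g g' s)
    (hF : ContinuousWithinAt F (Ici s) s)
    (hK : ∀ u, |K u - K s - (g u - g s) * F u| ≤ C * ((u - s) * (F u - F s))) :
    HasDerivWithinAt K (g' * F s) (Ioi s) s := by
  have hFs : Tendsto F (𝓝[>] s) (𝓝 (F s)) := hF.mono Ioi_subset_Ici_self
  have hgs := (hasDerivWithinAt_iff_tendsto_slope' self_notMem_Ioi).1 (hg.hasDerivWithinAt)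
  have hbound : Tendsto (fun u ↦ C * (F u - F s)) (𝓝[>] s) (𝓝 0) := by
    simpa using (hFs.sub_const (F s)).const_mul C
  have herr : Tendsto (fun u ↦ slope K s u - slope g s u * F u) (𝓝[>] s) (𝓝 0) := by
    refine squeeze_zero_norm' ?_ hbound
    filter_upwards [self_mem_nhdsWithin] with u hu
    have hu' : 0 < u - s := sub_pos.2 hu
    rw [slope_def_field, slope_def_field, div_mul_eq_mul_div, ← sub_div, norm_div,
      Real.norm_eq_abs, Real.norm_of_nonneg hu'.le, div_le_iff₀ hu']
    linarith [hK u]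
  rw [hasDerivWithinAt_iff_tendsto_slope' self_notMem_Ioi]
  simpa using herr.add (hgs.mul hFs)

lemma integral_deriv_mul_eq_sub_of_abs_sub_sub_mul_le {g' : ℝ → ℝ} (x y : ℝ) (hF : Monotone F)
    (hFc : ∀ s, ContinuousWithinAt F (Ici s) s) (hg : ∀ s, HasDerivAt g (g' s) s)
    (hg' : Continuous g')
    (hK : ∀ s, ∃ C, ∀ u, |K u - K s - (g u - g s) * F u| ≤ C * ((u - s) * (F u - F s))) :
    ∫ s in x..y, g' s * F s = K y - K x := by
  choose C hC using hK
  exact intervalIntegral.integral_eq_sub_of_hasDeriv_right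
    (fun s _ ↦ (continuousAt_of_abs_sub_sub_mul_le hF (hg s).continuousAt
      (hC s)).continuousWithinAt)
    (fun s _ ↦ hasDerivWithinAt_Ioi_of_abs_sub_sub_mul_le (hg s) (hFc s) (hC s))
    (hF.intervalIntegrable.continuousOn_mul hg'.continuousOn)

end StieltjesByParts

lemma le_of_forall_pos_le_add_mul {a b c : ℝ} (h : ∀ ε > 0, a ≤ b + ε * c) : a ≤ b := by
  have hlim : Tendsto (fun ε ↦ b + ε * c) (𝓝[>] 0) (𝓝 (b + 0 * c)) :=
    (Continuous.tendsto (by fun_prop) 0).mono_left nhdsWithin_le_nhds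
  rw [zero_mul, add_zero] at hlim
  exact ge_of_tendsto hlim (eventually_nhdsWithin_of_forall h)

lemma integral_abs_le_of_forall_continuous {X : Type*} [TopologicalSpace X] [NormalSpace X]
    [MeasurableSpace X] [BorelSpace X] {μ : Measure X} [μ.WeaklyRegular] [IsFiniteMeasure μ]
    {h : X → ℝ} {N : ℝ} (hh : Integrable h μ)
    (H : ∀ f : X → ℝ, Continuous f → (∀ x, |f x| ≤ 1) → ∫ x, f x * h x ∂μ ≤ N) :
    ∫ x, |h x| ∂μ ≤ N := by
  refine le_of_forall_pos_le_add_mul (c := 2 + μ.real univ) fun ε hε ↦ ?_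
  obtain ⟨k, hk, hkint⟩ := hh.exists_boundedContinuous_integral_sub_le hε
  have hpos (x : X) : 0 < |k x| + ε := by positivity
  -- A continuous substitute for the sign of `k`.
  let f : X → ℝ := fun x ↦ k x / (|k x| + ε)
  have hf : Continuous f := k.continuous.div (by fun_prop) fun x ↦ (hpos x).ne'
  have hf1 (x : X) : |f x| ≤ 1 := by
    rw [abs_div, abs_of_pos (hpos x)]
    exact div_le_one_of_le₀ (by linarith) (hpos x).le
  have hfk (x : X) : |k x| ≤ f x * k x + ε := by
    rw [← sub_le_iff_le_add, div_mul_eq_mul_div, le_div_iff₀ (hpos x), ← abs_mul_abs_self (k x)]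
    nlinarith
  have hfh (x : X) : |h x| ≤ f x * h x + (2 * ‖h x - k x‖ + ε) := by
    have h1 : |h x| - |k x| ≤ ‖h x - k x‖ := abs_sub_abs_le_abs_sub _ _
    have h2 : f x * (k x - h x) ≤ 1 * ‖h x - k x‖ := by
      rw [norm_sub_rev]
      refine (le_abs_self _).trans ?_
      rw [abs_mul]
      exact mul_le_mul_of_nonneg_right (hf1 x) (abs_nonneg _)
    linarith [hfk x]
  have hfhint : Integrable (fun x ↦ f x * h x) μ :=
    hh.bdd_mul hf.aestronglyMeasurable (.of_forall hf1)
  have hhk : Integrable (fun x ↦ 2 * ‖h x - k x‖) μ := (hh.sub hkint).norm.const_mul 2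
  have herr : Integrable (fun x ↦ 2 * ‖h x - k x‖ + ε) μ := hhk.add (integrable_const ε)
  calc ∫ x, |h x| ∂μ
      ≤ ∫ x, f x * h x + (2 * ‖h x - k x‖ + ε) ∂μ :=
        integral_mono hh.abs (hfhint.add herr) hfh
    _ = ∫ x, f x * h x ∂μ + (2 * ∫ x, ‖h x - k x‖ ∂μ + μ.real univ * ε) := by
        rw [integral_add hfhint herr, integral_add hhk (integrable_const ε),
          integral_const_mul, integral_const, smul_eq_mul]
    _ ≤ N + ε * (2 + μ.real univ) := by linarith [H f hf hf1]

lemma integral_abs_le_of_forall_polynomial {h : ℝ → ℝ} {x y N : ℝ} (hxy : x ≤ y)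
    (hh : IntervalIntegrable h volume x y)
    (H : ∀ (p : ℝ[X]) (M : ℝ), (∀ s ∈ Icc x y, |p.eval s| ≤ M) →
      ∫ s in x..y, p.eval s * h s ≤ M * N) :
    ∫ s in x..y, |h s| ≤ N := by
  have hh' := (intervalIntegrable_iff_integrableOn_Ioc_of_le hxy).1 hh
  rw [intervalIntegral.integral_of_le hxy]
  refine integral_abs_le_of_forall_continuous hh' fun f hf hf1 ↦ ?_
  rw [← intervalIntegral.integral_of_le hxy]
  refine le_of_forall_pos_le_add_mul (c := N + ∫ s in x..y, |h s|) fun ε hε ↦ ?_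
  obtain ⟨p, hp⟩ := exists_polynomial_near_of_continuousOn x y f hf.continuousOn ε hε
  have hpM : ∀ s ∈ Icc x y, |p.eval s| ≤ 1 + ε := fun s hs ↦ by
    linarith [abs_sub_abs_le_abs_sub (p.eval s) (f s), hp s hs, hf1 s]
  have hfp : ∀ s ∈ Icc x y, f s * h s ≤ p.eval s * h s + ε * |h s| := fun s hs ↦ by
    have h1 : (f s - p.eval s) * h s ≤ ε * |h s| := by
      refine (le_abs_self _).trans ?_
      rw [abs_mul, abs_sub_comm]
      exact mul_le_mul_of_nonneg_right (hp s hs).le (abs_nonneg _)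
    linarith
  have hfh := hh.continuousOn_mul hf.continuousOn
  have hph := hh.continuousOn_mul p.continuous.continuousOn
  have hεh := hh.abs.const_mul ε
  calc ∫ s in x..y, f s * h s
      ≤ ∫ s in x..y, p.eval s * h s + ε * |h s| :=
        intervalIntegral.integral_mono_on hxy hfh (hph.add hεh) hfp
    _ = (∫ s in x..y, p.eval s * h s) + ε * ∫ s in x..y, |h s| := by
        rw [intervalIntegral.integral_add hph hεh, intervalIntegral.integral_const_mul]
    _ ≤ N + ε * (N + ∫ s in x..y, |h s|) := by linarith [H p _ hpM]

lemma polynomial_derivative_surjective (K : Type*) [Field K] [CharZero K] :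
    Function.Surjective (derivative : K[X] →ₗ[K] K[X]) := fun p ↦ by
  induction p using Polynomial.induction_on' with
  | add p q hp hq =>
    obtain ⟨P, rfl⟩ := hp
    obtain ⟨Q, rfl⟩ := hq
    exact ⟨P + Q, derivative_add⟩
  | monomial n c =>
    refine ⟨monomial (n + 1) (c / (n + 1)), ?_⟩
    rw [derivative_monomial, Nat.cast_add_one, add_tsub_cancel_right,
      div_mul_cancel₀ _ n.cast_add_one_ne_zero]

/-- A tracial state: a normalized positive trace, possibly with a kernel. Positivity refers to the
order of `ℂ`, so it includes that `τ x` is real for `0 ≤ x`. -/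
structure IsTracialState (τ : A →ₗ[ℂ] ℂ) : Prop where
  map_mul_comm : ∀ x y : A, τ (x * y) = τ (y * x)
  map_nonneg : ∀ x : A, 0 ≤ x → 0 ≤ τ x
  map_one : τ 1 = 1

omit [StarOrderedRing A] in
lemma IsFiniteTrace.isTracialState {τ : A →ₗ[ℂ] ℂ} (hτ : IsFiniteTrace τ) : IsTracialState τ :=
  ⟨hτ.tracial, hτ.pos, hτ.normalized⟩

namespace IsTracialState

variable {τ : A →ₗ[ℂ] ℂ}

lemma continuous (hτ : IsTracialState τ) : Continuous τ :=
  map_continuous (PositiveLinearMap.mk₀ τ hτ.map_nonneg)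

/-- The real part of a tracial state, as a bounded real-linear functional. -/
noncomputable def reCLM (hτ : IsTracialState τ) : A →L[ℝ] ℝ :=
  Complex.reCLM.comp ((⟨τ, hτ.continuous⟩ : A →L[ℂ] ℂ).restrictScalars ℝ)

lemma reCLM_apply (hτ : IsTracialState τ) (x : A) : hτ.reCLM x = (τ x).re := rfl

lemma isPositiveTrace_reCLM (hτ : IsTracialState τ) : IsPositiveTrace hτ.reCLM where
  map_mul_comm x y := by rw [reCLM_apply, reCLM_apply, hτ.map_mul_comm]
  map_nonneg x hx := (Complex.nonneg_iff.1 (hτ.map_nonneg x hx)).1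

lemma reCLM_abs (hτ : IsTracialState τ) {x : A} (hx : IsSelfAdjoint x) :
    hτ.reCLM (CFC.abs x) = traceNorm τ x := by
  rw [CFC.abs_eq_cfc_norm x hx]
  rfl

end IsTracialState

namespace IsSpectralResolution

variable {τ : A →ₗ[ℂ] ℂ} {a b : A} {e ea eb : ℝ → A} {φ : A →L[ℝ] ℝ}

lemma isSelfAdjoint (he : IsSpectralResolution τ a e) : IsSelfAdjoint a := by
  have hle := he.above (-‖a‖ - 1)
  rw [he.bot _ (sub_one_lt _), sub_zero, mul_one, Complex.coe_smul] at hle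
  exact .of_ge hle (.smul (.all _) (.one A))

omit [StarOrderedRing A] in
lemma isStarProjection (he : IsSpectralResolution τ a e) (s : ℝ) : IsStarProjection (e s) :=
  ⟨he.idem s, he.selfAdjoint s⟩

lemma mul_eq_left_of_le (he : IsSpectralResolution τ a e) {s u : ℝ} (hsu : s ≤ u) :
    e s * e u = e s :=
  ((he.isStarProjection s).le_iff_mul_eq_left (he.isStarProjection u)).1 (he.mono hsu)

lemma mul_eq_right_of_le (he : IsSpectralResolution τ a e) {s u : ℝ} (hsu : s ≤ u) :
    e u * e s = e s :=
  ((he.isStarProjection s).le_iff_mul_eq_right (he.isStarProjection u)).1 (he.mono hsu)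

lemma commute_of_le (he : IsSpectralResolution τ a e) {s u : ℝ} (hsu : s ≤ u) :
    Commute (e s) (e u) :=
  (he.mul_eq_left_of_le hsu).trans (he.mul_eq_right_of_le hsu).symm

lemma smul_sub_le_mul_sub (he : IsSpectralResolution τ a e) {s u : ℝ} (hsu : s ≤ u) :
    s • (e u - e s) ≤ a * (e u - e s) := by
  have hcomm : Commute (a * (1 - e s) - (s : ℂ) • (1 - e s)) (e u) := by
    have hs : Commute (1 - e s) (e u) := (Commute.one_left _).sub_left (he.commute_of_le hsu)
    exact (Commute.mul_left (he.comm u) hs).sub_left (hs.smul_left _)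
  have hnonneg := hcomm.mul_nonneg (sub_nonneg.2 (he.above s)) (he.isStarProjection u).nonneg
  rwa [sub_mul, mul_assoc, smul_mul_assoc, sub_mul, one_mul, he.mul_eq_left_of_le hsu,
    Complex.coe_smul, sub_nonneg] at hnonneg

lemma mul_sub_le_smul_sub (he : IsSpectralResolution τ a e) {s u : ℝ} (hsu : s ≤ u) :
    a * (e u - e s) ≤ u • (e u - e s) := by
  have hcomm : Commute ((u : ℂ) • e u - a * e u) (1 - e s) := by
    have ha : Commute a (1 - e s) := (Commute.one_right _).sub_right (he.comm s)
    have hu : Commute (e u) (1 - e s) :=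
      (Commute.one_right _).sub_right (he.commute_of_le hsu).symm
    exact (hu.smul_left _).sub_left (ha.mul_left hu)
  have hnonneg := hcomm.mul_nonneg (sub_nonneg.2 (he.below u))
    (he.isStarProjection s).one_sub_nonneg
  rwa [sub_mul, mul_assoc, smul_mul_assoc, mul_sub, mul_one, he.mul_eq_right_of_le hsu,
    Complex.coe_smul, sub_nonneg] at hnonneg

lemma mul_sub_sub_smul_sub_mem_Icc (he : IsSpectralResolution τ a e) (s u : ℝ) :
    a * (e u - e s) - s • (e u - e s) ∈ Icc 0 ((u - s) • (e u - e s)) := by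
  rw [sub_smul u s, mem_Icc, sub_nonneg, sub_le_sub_iff_right]
  rcases le_total s u with hsu | hus
  · exact ⟨he.smul_sub_le_mul_sub hsu, he.mul_sub_le_smul_sub hsu⟩
  · rw [← neg_sub (e s), mul_neg, smul_neg, smul_neg, neg_le_neg_iff, neg_le_neg_iff]
    exact ⟨he.mul_sub_le_smul_sub hus, he.smul_sub_le_mul_sub hus⟩

lemma exists_abs_map_aeval_sub_mul_sub_le (hφ : IsPositiveTrace φ)
    (he : IsSpectralResolution τ a e) (G : ℝ[X]) (s : ℝ) :
    ∃ c, ∀ u, |φ (aeval a (G - C (G.eval s)) * (e u - e s))| ≤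
      c * ((u - s) * (φ (e u) - φ (e s))) := by
  -- `G - G(s) = (X - s) H`, and `a - s` lies between `0` and `u - s` on the projection `e u - e s`.
  obtain ⟨H, hH⟩ := X_sub_C_dvd_sub_C_eval (a := s) (p := G)
  refine ⟨‖aeval a H‖, fun u ↦ ?_⟩
  obtain ⟨hnonneg, hle⟩ := he.mul_sub_sub_smul_sub_mem_Icc s u
  have hfactor : aeval a (G - C (G.eval s)) * (e u - e s) =
      aeval a H * (a * (e u - e s) - s • (e u - e s)) := by
    rw [hH, mul_comm, map_mul, mul_assoc, map_sub, aeval_X, aeval_C, sub_mul, Algebra.smul_def]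
  have hHa : IsSelfAdjoint (aeval a H) := isSelfAdjoint_aeval he.isSelfAdjoint H
  calc |φ (aeval a (G - C (G.eval s)) * (e u - e s))|
      ≤ ‖aeval a H‖ * φ (a * (e u - e s) - s • (e u - e s)) := by
        rw [hfactor]
        exact hφ.abs_map_mul_le_of_nonneg hHa hnonneg
    _ ≤ ‖aeval a H‖ * φ ((u - s) • (e u - e s)) := by
        gcongr
        exact hφ.monotone hle
    _ = ‖aeval a H‖ * ((u - s) * (φ (e u) - φ (e s))) := by
        rw [map_smul, smul_eq_mul, map_sub]

lemma integral_derivative_eval_mul_map (hφ : IsPositiveTrace φ) (he : IsSpectralResolution τ a e)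
    (hc : ∀ s, ContinuousWithinAt (fun u ↦ φ (e u)) (Ici s) s) {R : ℝ} (hR : ‖a‖ < R)
    (G : ℝ[X]) :
    ∫ s in (-R)..R, (derivative G).eval s * φ (e s) = G.eval R * φ 1 - φ (aeval a G) := by
  have hmono : Monotone fun s ↦ φ (e s) := hφ.monotone.comp he.mono
  have hK (s : ℝ) : ∃ c, ∀ u, |(G.eval u * φ (e u) - φ (aeval a G * e u)) -
      (G.eval s * φ (e s) - φ (aeval a G * e s)) - (G.eval u - G.eval s) * φ (e u)| ≤
        c * ((u - s) * (φ (e u) - φ (e s))) := by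
    obtain ⟨c, hcG⟩ := he.exists_abs_map_aeval_sub_mul_sub_le hφ G s
    refine ⟨c, fun u ↦ le_of_eq_of_le ?_ (hcG u)⟩
    rw [← abs_neg]
    congr 1
    simp only [map_sub, aeval_C, sub_mul, mul_sub, ← Algebra.smul_def, map_smul, smul_eq_mul]
    ring
  rw [integral_deriv_mul_eq_sub_of_abs_sub_sub_mul_le _ _ hmono hc G.hasDerivAt
    (derivative G).continuous hK, he.top R hR.le, he.bot (-R) (neg_lt_neg hR)]
  simp

lemma integral_abs_map_sub_map_le (hφ : IsPositiveTrace φ) (hea : IsSpectralResolution τ a ea)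
    (heb : IsSpectralResolution τ b eb)
    (hca : ∀ s, ContinuousWithinAt (fun u ↦ φ (ea u)) (Ici s) s)
    (hcb : ∀ s, ContinuousWithinAt (fun u ↦ φ (eb u)) (Ici s) s)
    {R : ℝ} (haR : ‖a‖ < R) (hbR : ‖b‖ < R) :
    ∫ s in (-R)..R, |φ (ea s) - φ (eb s)| ≤ φ (CFC.abs (a - b)) := by
  have hR : 0 < R := (norm_nonneg a).trans_lt haR
  have hFa : IntervalIntegrable (fun s ↦ φ (ea s)) volume (-R) R :=
    (hφ.monotone.comp hea.mono).intervalIntegrable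
  have hFb : IntervalIntegrable (fun s ↦ φ (eb s)) volume (-R) R :=
    (hφ.monotone.comp heb.mono).intervalIntegrable
  refine integral_abs_le_of_forall_polynomial (by linarith) (hFa.sub hFb) fun g M hg ↦ ?_
  obtain ⟨G, rfl⟩ := polynomial_derivative_surjective ℝ g
  calc ∫ s in (-R)..R, (derivative G).eval s * (φ (ea s) - φ (eb s))
      = (∫ s in (-R)..R, (derivative G).eval s * φ (ea s)) -
          ∫ s in (-R)..R, (derivative G).eval s * φ (eb s) := by
        simp only [mul_sub]
        exact intervalIntegral.integral_sub
          (hFa.continuousOn_mul (derivative G).continuous.continuousOn)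
          (hFb.continuousOn_mul (derivative G).continuous.continuousOn)
    _ = -(φ (aeval a G) - φ (aeval b G)) := by
        rw [hea.integral_derivative_eval_mul_map hφ hca haR,
          heb.integral_derivative_eval_mul_map hφ hcb hbR]
        ring
    _ ≤ |φ (aeval a G) - φ (aeval b G)| := neg_le_abs _
    _ ≤ M * φ (CFC.abs (a - b)) :=
        hφ.abs_map_aeval_sub_le hea.isSelfAdjoint heb.isSelfAdjoint haR.le hbR.le hg

lemma monotone_re_map (hτ : IsTracialState τ) (he : IsSpectralResolution τ a e) :
    Monotone fun s ↦ (τ (e s)).re :=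
  hτ.isPositiveTrace_reCLM.monotone.comp he.mono

lemma spectralScale_le_iff (hτ : IsTracialState τ) (he : IsSpectralResolution τ a e) {t : ℝ}
    (ht : t ∈ Ioo 0 1) (s : ℝ) : spectralScale τ e t ≤ s ↔ 1 - (τ (e s)).re ≤ t := by
  have hne : {s : ℝ | 1 - (τ (e s)).re ≤ t}.Nonempty :=
    ⟨‖a‖, by simpa [he.top ‖a‖ le_rfl, hτ.map_one] using ht.1.le⟩
  have hbdd : BddBelow {s : ℝ | 1 - (τ (e s)).re ≤ t} :=
    ⟨-‖a‖, fun s (hs : 1 - (τ (e s)).re ≤ t) ↦ by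
      by_contra! hsa
      rw [he.bot s hsa, map_zero, Complex.zero_re, sub_zero] at hs
      exact hs.not_gt ht.2⟩
  refine ⟨fun hs ↦ ?_, fun hs ↦ csInf_le hbdd hs⟩
  have hright : ∀ u > s, 1 - (τ (e u)).re ≤ t := fun u hu ↦ by
    obtain ⟨v, hv, hvu⟩ := exists_lt_of_csInf_lt hne (hs.trans_lt hu)
    exact (sub_le_sub_left (he.monotone_re_map hτ hvu.le) 1).trans hv
  exact le_of_tendsto (((he.rightCont s).mono Ioi_subset_Ici_self).tendsto.const_sub 1)
    (eventually_nhdsWithin_of_forall hright)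

omit [StarOrderedRing A] in
lemma eq_of_notMem_Ioc (hea : IsSpectralResolution τ a ea) (heb : IsSpectralResolution τ b eb)
    {R : ℝ} (haR : ‖a‖ < R) (hbR : ‖b‖ < R) {s : ℝ} (hs : s ∉ Ioc (-R) R) : ea s = eb s := by
  rcases le_or_gt s (-R) with hsR | hsR
  · rw [hea.bot s (hsR.trans_lt (neg_lt_neg haR)), heb.bot s (hsR.trans_lt (neg_lt_neg hbR))]
  · have hRs : R < s := lt_of_not_ge fun h ↦ hs ⟨hsR, h⟩
    rw [hea.top s (haR.trans hRs).le, heb.top s (hbR.trans hRs).le]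

lemma lintegral_enorm_spectralScale_sub_le (hτ : IsTracialState τ)
    (hea : IsSpectralResolution τ a ea) (heb : IsSpectralResolution τ b eb) :
    ∫⁻ t in Ioo 0 1, ‖spectralScale τ ea t - spectralScale τ eb t‖ₑ ≤
      ∫⁻ s, ‖(τ (ea s)).re - (τ (eb s)).re‖ₑ := by
  calc ∫⁻ t in Ioo 0 1, ‖spectralScale τ ea t - spectralScale τ eb t‖ₑ
      ≤ ∫⁻ s, ‖(1 - (τ (ea s)).re) - (1 - (τ (eb s)).re)‖ₑ :=
        lintegral_enorm_sub_le_of_le_iff_le measurableSet_Ioo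
          ((hea.monotone_re_map hτ).measurable.const_sub 1)
          ((heb.monotone_re_map hτ).measurable.const_sub 1)
          (fun _ ht ↦ hea.spectralScale_le_iff hτ ht) (fun _ ht ↦ heb.spectralScale_le_iff hτ ht)
    _ = ∫⁻ s, ‖(τ (ea s)).re - (τ (eb s)).re‖ₑ := by
        simp only [sub_sub_sub_cancel_left, enorm_sub_rev]

lemma integral_abs_spectralScale_sub_le (hτ : IsTracialState τ)
    (hea : IsSpectralResolution τ a ea) (heb : IsSpectralResolution τ b eb) {R : ℝ}
    (haR : ‖a‖ < R) (hbR : ‖b‖ < R) :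
    ∫ t in (0 : ℝ)..1, |spectralScale τ ea t - spectralScale τ eb t| ≤
      ∫ s in (-R)..R, |(τ (ea s)).re - (τ (eb s)).re| := by
  have hR : -R ≤ R := neg_le_self ((norm_nonneg a).trans haR.le)
  let D : ℝ → ℝ := fun s ↦ (τ (ea s)).re - (τ (eb s)).re
  have hsupp : Function.support D ⊆ Ioc (-R) R := fun s hs ↦ by
    by_contra hsR
    exact hs (by simp only [D, hea.eq_of_notMem_Ioc heb haR hbR hsR, sub_self])
  have hsuppAbs : Function.support (fun s ↦ |D s|) ⊆ Ioc (-R) R := by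
    simpa [Function.support_subset_iff] using hsupp
  have hD : Integrable D :=
    (integrableOn_iff_integrable_of_support_subset hsupp).1
      ((intervalIntegrable_iff_integrableOn_Ioc_of_le hR).1
        ((hea.monotone_re_map hτ).intervalIntegrable.sub
          (heb.monotone_re_map hτ).intervalIntegrable))
  rw [intervalIntegral.integral_of_le zero_le_one, integral_Ioc_eq_integral_Ioo,
    intervalIntegral.integral_eq_integral_of_support_subset hsuppAbs,
    ← ENNReal.ofReal_le_ofReal_iff (integral_nonneg fun s ↦ abs_nonneg (D s))]
  calc ENNReal.ofReal (∫ t in Ioo 0 1, |spectralScale τ ea t - spectralScale τ eb t|)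
      ≤ ∫⁻ t in Ioo 0 1, ‖spectralScale τ ea t - spectralScale τ eb t‖ₑ := by
        rw [← Real.enorm_of_nonneg (integral_nonneg fun t ↦ abs_nonneg _)]
        exact (enorm_integral_le_lintegral_enorm _).trans_eq (by simp only [Real.enorm_abs])
    _ ≤ ∫⁻ s, ‖D s‖ₑ := hea.lintegral_enorm_spectralScale_sub_le hτ heb
    _ = ENNReal.ofReal (∫ s, |D s|) := (ofReal_integral_norm_eq_lintegral_enorm hD).symm

end IsSpectralResolution

theorem spectralScale_L1_norm_estimate_general {τ : A →ₗ[ℂ] ℂ} (hτ : IsTracialState τ) {a b : A}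
    {ea eb : ℝ → A} (hea : IsSpectralResolution τ a ea) (heb : IsSpectralResolution τ b eb) :
    ∫ t in (0:ℝ)..1, |spectralScale τ ea t - spectralScale τ eb t| ≤ traceNorm τ (a - b) := by
  obtain ⟨R, hR⟩ := exists_gt (max ‖a‖ ‖b‖)
  obtain ⟨haR, hbR⟩ := max_lt_iff.1 hR
  calc ∫ t in (0:ℝ)..1, |spectralScale τ ea t - spectralScale τ eb t|
      ≤ ∫ s in (-R)..R, |(τ (ea s)).re - (τ (eb s)).re| :=
        hea.integral_abs_spectralScale_sub_le hτ heb haR hbR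
    _ ≤ hτ.reCLM (CFC.abs (a - b)) :=
        hea.integral_abs_map_sub_map_le hτ.isPositiveTrace_reCLM heb hea.rightCont heb.rightCont
          haR hbR
    _ = traceNorm τ (a - b) := hτ.reCLM_abs (hea.isSelfAdjoint.sub heb.isSelfAdjoint)

/-- Petz's estimate: spectral scales are Lipschitz with respect to the trace norm:
`‖λ_a − λ_b‖_{L¹[0,1]} ≤ ‖a − b‖₁`. -/
theorem spectralScale_L1_norm_estimate
    (τ : A →ₗ[ℂ] ℂ) (hτ : IsII1Trace τ) (a b : A)
    (ha : IsSelfAdjoint a) (hb : IsSelfAdjoint b)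
    (ea eb : ℝ → A) (hea : IsSpectralResolution τ a ea) (heb : IsSpectralResolution τ b eb) :
    ∫ t in (0:ℝ)..1, |spectralScale τ ea t - spectralScale τ eb t| ≤ traceNorm τ (a - b) :=
  spectralScale_L1_norm_estimate_general hτ.toIsFiniteTrace.isTracialState hea heb
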